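/- Fix an integer n ≥ 1. Let B_n ⊆ A be the ℂ-subalgebra generated by x, y, the n+2 elements x^i y^{n+1−i} v for i = 0, 1, …, n+1, and the element x^{n+1} u. Then B_n is D-stable, and for every ν ∈ ℕ the set m_ν(B_n) := D^ν(B_n ∩ ker D^{ν+1}) equals the ℂ-linear span of the monomials x^i y^j with i + j ≥ (n+2)ν, i.e. the ideal ⟨x, y⟩^{(n+2)ν} of the ring ℂ[x, y] = ker D. (This is part (1) of the main theorem: the affine extension P̂_n of SL₂ has m_ν(P̂_n) = ⟨x,y⟩^{(n+2)ν}.) -/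

import Mathlib

/-!
Give `x`, `y` weight `1` and `u`, `v` weight `-1`; then `D` raises weights by `2`. The generators
of `B_n` other than `x` and `y` have weight `n` and `D`-degree `1`, so an element of `B_n` is a
sum of terms of `D`-degree at most `k` and weight at least `n k`. Applying `D^ν` kills the terms
with `k < ν` and leaves weight at least `(n + 2) ν`. Thus `m_ν(B_n)` lies in the kernel of `D` and
has weight at least `(n + 2) ν`.

On the kernel, weight is degree. Modulo `u` we have `x v = 1`, so `f` of weight at least `m`
satisfies `x^N f ≡ p` with `p` in `x`, `y` of order at least `m + N`. If `D f = 0`, then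
`x^N f - p` is a multiple of `u` in the kernel, hence zero, the kernel being factorially closed
and `D u ≠ 0`. Likewise `y^M f` is a polynomial in `x`, `y`, using `v`. As `x` and `y` are
algebraically independent, unique factorization in `ℂ[x, y]` makes `f` itself a polynomial of
order at least `m`.

Conversely, `m_ν · m_μ ⊆ m_{ν+μ}` for every subalgebra by the Leibniz rule, `m_0(B_n)` contains
`ℂ[x, y]`, and `m_1(B_n)` contains every monomial of degree `n + 2`, the image of a generator.
-/

open MvPolynomial

noncomputable section

/-- The ideal `⟨XV − YU − 1⟩` of `ℂ[X, Y, U, V]` (with `X = X 0`, `Y = X 1`, `U = X 2`,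
`V = X 3`). -/
def sl2Ideal : Ideal (MvPolynomial (Fin 4) ℂ) :=
  Ideal.span {X 0 * X 3 - X 1 * X 2 - 1}

/-- The coordinate ring `A = ℂ[X,Y,U,V]/⟨XV − YU − 1⟩` of `SL₂` over `ℂ`. -/
abbrev SL2R : Type := MvPolynomial (Fin 4) ℂ ⧸ sl2Ideal

/-- `x`, the image of `X` in `A`. -/
def sx : SL2R := Ideal.Quotient.mk sl2Ideal (X 0)
/-- `y`, the image of `Y` in `A`. -/
def sy : SL2R := Ideal.Quotient.mk sl2Ideal (X 1)
/-- `u`, the image of `U` in `A`. -/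
def su : SL2R := Ideal.Quotient.mk sl2Ideal (X 2)
/-- `v`, the image of `V` in `A`. -/
def sv : SL2R := Ideal.Quotient.mk sl2Ideal (X 3)

/-- The ℂ-subalgebra `B_n ⊆ A` generated by `x`, `y`, the elements `x^i y^{n+1−i} v` for
`i = 0, …, n+1`, and `x^{n+1} u`; it is the coordinate ring of the affine extension
`P̂_n` of `SL₂`. -/
def Bn (n : ℕ) : Subalgebra ℂ SL2R :=
  Algebra.adjoin ℂ ({sx, sy, sx ^ (n + 1) * su} ∪
    {w : SL2R | ∃ i ≤ n + 1, w = sx ^ i * sy ^ (n + 1 - i) * sv})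

/-! ### Locally nilpotent derivations -/

lemma iterate_map_eq_zero_of_le {F M : Type*} [Zero M] [FunLike F M M] [ZeroHomClass F M M]
    {f : F} {k l : ℕ} {a : M} (hkl : k ≤ l) (ha : f^[k] a = 0) : f^[l] a = 0 := by
  obtain ⟨m, rfl⟩ := Nat.exists_eq_add_of_le' hkl
  rw [Function.iterate_add_apply, ha, iterate_map_zero]

section Derivation

open Finset

variable {R A : Type*} [CommSemiring R] [CommRing A] [Algebra R A] (D : Derivation R A A)

lemma derivation_iterate_mul (n : ℕ) (a b : A) :
    D^[n] (a * b) = ∑ ij ∈ antidiagonal n, n.choose ij.1 • (D^[ij.1] a * D^[ij.2] b) := by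
  induction n with
  | zero => simp
  | succ n ih =>
    rw [sum_antidiagonal_choose_succ_nsmul (fun i j => D^[i] a * D^[j] b) n]
    simp only [Function.iterate_succ_apply', ih, map_sum, map_nsmul, Derivation.leibniz,
      smul_eq_mul, smul_add, sum_add_distrib, add_right_inj]
    refine sum_congr rfl fun ⟨i, j⟩ hij => ?_
    rw [n.choose_symm_of_eq_add (HasAntidiagonal.mem_antidiagonal.1 hij).symm, mul_comm]

variable {D}

lemma iterate_add_mul {k l : ℕ} {a b : A} (ha : D^[k + 1] a = 0) (hb : D^[l + 1] b = 0) :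
    D^[k + l] (a * b) = (k + l).choose k • (D^[k] a * D^[l] b) := by
  rw [derivation_iterate_mul, sum_eq_single (k, l)]
  · rintro ⟨i, j⟩ hij hne
    rw [HasAntidiagonal.mem_antidiagonal] at hij
    obtain hi | hj : k + 1 ≤ i ∨ l + 1 ≤ j := by
      by_contra! h
      exact hne (Prod.ext (by lia) (by lia))
    · simp [iterate_map_eq_zero_of_le hi ha]
    · simp [iterate_map_eq_zero_of_le hj hb]
  · simp

lemma iterate_add_succ_mul_eq_zero {k l : ℕ} {a b : A} (ha : D^[k + 1] a = 0)
    (hb : D^[l + 1] b = 0) : D^[k + l + 1] (a * b) = 0 := by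
  rw [Function.iterate_succ_apply'] at ha hb ⊢
  rw [iterate_add_mul (by rwa [Function.iterate_succ_apply'])
    (by rwa [Function.iterate_succ_apply']), map_nsmul, Derivation.leibniz, ha, hb]
  simp

variable (D) in
/-- The subalgebra of elements on which `D` acts nilpotently; `D` is locally nilpotent when it is
everything. -/
def nilSubalgebra : Subalgebra R A where
  carrier := {a | ∃ k, D^[k] a = 0}
  add_mem' := by
    rintro a b ⟨k, ha⟩ ⟨l, hb⟩
    exact ⟨max k l, by rw [iterate_map_add, iterate_map_eq_zero_of_le (le_max_left k l) ha,
      iterate_map_eq_zero_of_le (le_max_right k l) hb, add_zero]⟩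
  mul_mem' := by
    rintro a b ⟨k, ha⟩ ⟨l, hb⟩
    exact ⟨k + l + 1, iterate_add_succ_mul_eq_zero (iterate_map_eq_zero_of_le k.le_succ ha)
      (iterate_map_eq_zero_of_le l.le_succ hb)⟩
  algebraMap_mem' r := ⟨1, by simp⟩

lemma mem_nilSubalgebra {a : A} : a ∈ nilSubalgebra D ↔ ∃ k, D^[k] a = 0 := Iff.rfl

lemma exists_iterate_ne_zero_succ_eq_zero {a : A} (ha : a ∈ nilSubalgebra D) (ha0 : a ≠ 0) :
    ∃ k, D^[k] a ≠ 0 ∧ D^[k + 1] a = 0 := by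
  classical
  rw [mem_nilSubalgebra] at ha
  obtain ⟨k, hk⟩ := Nat.exists_eq_succ_of_ne_zero fun h : Nat.find ha = 0 =>
    ha0 (by simpa [h] using Nat.find_spec ha)
  exact ⟨k, Nat.find_min ha (by lia), by simpa [hk] using Nat.find_spec ha⟩

/-- The kernel of a locally nilpotent derivation of a domain is factorially closed, because
`D`-degrees of nonzero elements add up under multiplication. -/
lemma map_eq_zero_of_map_mul_eq_zero [IsDomain A] [CharZero A] {a b : A}
    (ha : a ∈ nilSubalgebra D) (hb : b ∈ nilSubalgebra D) (hab : a * b ≠ 0) (h : D (a * b) = 0) :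
    D a = 0 := by
  obtain ⟨k, hk, hk'⟩ := exists_iterate_ne_zero_succ_eq_zero ha (left_ne_zero_of_mul hab)
  obtain ⟨l, hl, hl'⟩ := exists_iterate_ne_zero_succ_eq_zero hb (right_ne_zero_of_mul hab)
  have hne : D^[k + l] (a * b) ≠ 0 := by
    rw [iterate_add_mul hk' hl']
    exact smul_ne_zero (Nat.choose_pos (k.le_add_right l)).ne' (mul_ne_zero hk hl)
  have hkl : k + l < 1 := by
    by_contra! hle
    exact hne (iterate_map_eq_zero_of_le hle h)
  obtain rfl : k = 0 := by lia
  exact hk'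

lemma eq_zero_of_dvd_of_map_eq_zero [IsDomain A] [CharZero A] (hD : nilSubalgebra D = ⊤)
    {s a : A} (hs : D s ≠ 0) (hsa : s ∣ a) (ha : D a = 0) : a = 0 := by
  obtain ⟨b, rfl⟩ := hsa
  by_contra hne
  exact hs (map_eq_zero_of_map_mul_eq_zero (b := b) (by simp [hD]) (by simp [hD]) hne ha)

variable (D) in
/-- The submodule `m_ν(C) = D^ν(C ∩ ker D^{ν+1})` of `ker D`, consisting of the leading
coefficients of the elements of `C` of `D`-degree at most `ν`. -/
def leadingSubmodule (C : Subalgebra R A) (ν : ℕ) : Submodule R A :=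
  (Subalgebra.toSubmodule C ⊓ LinearMap.ker ((D : A →ₗ[R] A) ^ (ν + 1))).map
    ((D : A →ₗ[R] A) ^ ν)

lemma mem_leadingSubmodule {C : Subalgebra R A} {ν : ℕ} {s : A} :
    s ∈ leadingSubmodule D C ν ↔ ∃ c ∈ C, D^[ν + 1] c = 0 ∧ D^[ν] c = s := by
  simp [leadingSubmodule, Submodule.mem_map, Module.End.pow_apply, and_assoc]

lemma map_eq_zero_of_mem_leadingSubmodule {C : Subalgebra R A} {ν : ℕ} {s : A}
    (hs : s ∈ leadingSubmodule D C ν) : D s = 0 := by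
  obtain ⟨c, -, hc, rfl⟩ := mem_leadingSubmodule.1 hs
  rwa [← Function.iterate_succ_apply' D]

lemma mem_leadingSubmodule_zero {C : Subalgebra R A} {s : A} :
    s ∈ leadingSubmodule D C 0 ↔ s ∈ C ∧ D s = 0 := by
  simp only [mem_leadingSubmodule, zero_add, Function.iterate_one, Function.iterate_zero, id_eq]
  grind

lemma map_mem_leadingSubmodule_one {C : Subalgebra R A} {c : A} (hc : c ∈ C)
    (hDc : D (D c) = 0) : D c ∈ leadingSubmodule D C 1 :=
  mem_leadingSubmodule.2 ⟨c, hc, hDc, rfl⟩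

end Derivation

lemma mul_mem_leadingSubmodule {K A : Type*} [Field K] [CharZero K] [CommRing A] [Algebra K A]
    {D : Derivation K A A} {C : Subalgebra K A} {ν μ : ℕ} {a b : A}
    (ha : a ∈ leadingSubmodule D C ν) (hb : b ∈ leadingSubmodule D C μ) :
    a * b ∈ leadingSubmodule D C (ν + μ) := by
  obtain ⟨c, hc, hc0, rfl⟩ := mem_leadingSubmodule.1 ha
  obtain ⟨d, hd, hd0, rfl⟩ := mem_leadingSubmodule.1 hb
  have hchoose : ((ν + μ).choose ν : K) ≠ 0 :=
    Nat.cast_ne_zero.2 (Nat.choose_pos (ν.le_add_right μ)).ne'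
  rw [← Submodule.smul_mem_iff _ hchoose, Nat.cast_smul_eq_nsmul, ← iterate_add_mul hc0 hd0]
  exact mem_leadingSubmodule.2
    ⟨c * d, mul_mem hc hd, iterate_add_succ_mul_eq_zero hc0 hd0, rfl⟩

lemma adjoin_le_iSup_of_gradedMonoid {ι R A : Type*} [AddMonoid ι] [CommSemiring R] [Semiring A]
    [Algebra R A] (F : ι → Submodule R A) [SetLike.GradedMonoid F] {s : Set A}
    (hs : ∀ a ∈ s, ∃ i, a ∈ F i) :
    Subalgebra.toSubmodule (Algebra.adjoin R s) ≤ ⨆ i, F i := by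
  rw [Algebra.adjoin_eq_span, Submodule.span_le]
  intro a ha
  obtain ⟨i, hi⟩ := (Submonoid.closure_le (S := SetLike.homogeneousSubmonoid F)).2 hs ha
  exact Submodule.mem_iSup_of_mem i hi

lemma mem_pow_idealOfVars_of_X_pow_mul_mem {σ R : Type*} [CommSemiring R] {i : σ} {m N : ℕ}
    {P : MvPolynomial σ R} (h : X i ^ N * P ∈ idealOfVars σ R ^ (m + N)) :
    P ∈ idealOfVars σ R ^ m := by
  rw [mem_pow_idealOfVars_iff'] at h ⊢
  intro e he
  have hcoeff := h (Finsupp.single i N + e) (by rw [map_add, Finsupp.degree_single]; lia)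
  rwa [X_pow_eq_monomial, coeff_monomial_mul, one_mul] at hcoeff

/-! ### The coordinate ring of `SL₂` -/

lemma sx_mul_sv : sx * sv = 1 + sy * su := by
  have h : Ideal.Quotient.mk sl2Ideal (X 0 * X 3 - X 1 * X 2 - 1) = 0 :=
    Ideal.Quotient.eq_zero_iff_mem.2 (Ideal.mem_span_singleton_self _)
  have h' : sx * sv - sy * su - 1 = 0 := by
    simpa only [map_sub, map_mul, map_one, ← sx.eq_1, ← sy.eq_1, ← su.eq_1, ← sv.eq_1] using h
  linear_combination h'

lemma adjoin_coordinates : Algebra.adjoin ℂ {sx, sy, su, sv} = (⊤ : Subalgebra ℂ SL2R) := by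
  have h := congrArg (Subalgebra.map (Ideal.Quotient.mkₐ ℂ sl2Ideal))
    (MvPolynomial.adjoin_range_X (R := ℂ) (σ := Fin 4))
  rw [Algebra.map_top, (AlgHom.range_eq_top _).2 (Ideal.Quotient.mkₐ_surjective ℂ sl2Ideal),
    AlgHom.map_adjoin] at h
  rw [← h]
  congr 1
  ext w
  simp [Fin.exists_fin_succ, sx, sy, su, sv, eq_comm]

lemma irreducible_sl2_equation :
    Irreducible (X 0 * X 3 - X 1 * X 2 - 1 : MvPolynomial (Fin 4) ℂ) := by
  rw [show (X 0 * X 3 - X 1 * X 2 - 1 : MvPolynomial (Fin 4) ℂ) =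
    X 0 * X 3 + -(X 1 * X 2 + 1) by ring]
  refine irreducible_mul_X_add _ _ 3 (X_ne_zero 0) (by simp) (fun h3 => ?_) ?_
  · rw [vars_neg] at h3
    have h3' : (3 : Fin 4) ∈ (X 1 * X 2 : MvPolynomial (Fin 4) ℂ).vars := by
      simpa using vars_add_subset _ _ h3
    simpa using vars_mul _ _ h3'
  · rw [X_prime.irreducible.isRelPrime_iff_not_dvd]
    rintro ⟨G, hG⟩
    simpa using congrArg (eval 0) hG

instance : IsDomain SL2R := by
  have : sl2Ideal.IsPrime :=
    (Ideal.span_singleton_prime irreducible_sl2_equation.ne_zero).2 irreducible_sl2_equation.prime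
  infer_instance

instance : CharZero SL2R := algebraRat.charZero _

lemma exists_algHom_of_det_eq_one {S : Type*} [CommRing S] [Algebra ℂ S] {a b c d : S}
    (hdet : a * d - b * c = 1) :
    ∃ φ : SL2R →ₐ[ℂ] S, φ sx = a ∧ φ sy = b ∧ φ su = c ∧ φ sv = d := by
  let ev : MvPolynomial (Fin 4) ℂ →ₐ[ℂ] S := aeval ![a, b, c, d]
  have hker : sl2Ideal ≤ RingHom.ker ev := by
    rw [sl2Ideal, Ideal.span_singleton_le_iff_mem, RingHom.mem_ker]
    simp [ev, hdet]
  have hφ (i : Fin 4) : Ideal.Quotient.liftₐ sl2Ideal ev hker (Ideal.Quotient.mk sl2Ideal (X i)) =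
      ![a, b, c, d] i := aeval_X _ i
  exact ⟨Ideal.Quotient.liftₐ sl2Ideal ev hker, hφ 0, hφ 1, hφ 2, hφ 3⟩

lemma algebraicIndependent_sx_sy : AlgebraicIndependent ℂ ![sx, sy] := by
  rw [algebraicIndependent_iff]
  intro P hP
  have hX : X 0 * P = 0 := by
    refine MvPolynomial.funext fun t => ?_
    by_cases ht : t 0 = 0
    · simp [ht]
    obtain ⟨φ, hφx, hφy, -, -⟩ :=
      exists_algHom_of_det_eq_one (a := t 0) (b := t 1) (c := 0) (d := (t 0)⁻¹) (by simp [ht])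
    have hφ : φ (aeval ![sx, sy] P) = eval t P := by
      rw [← AlgHom.comp_apply, comp_aeval, ← coe_aeval_eq_eval]
      refine congrArg (aeval · P) (_root_.funext fun i => ?_)
      fin_cases i
      exacts [hφx, hφy]
    rw [map_mul, ← hφ, hP, map_zero, mul_zero, map_zero]
  exact (mul_eq_zero.1 hX).resolve_left (X_ne_zero 0)

lemma sx_ne_zero : sx ≠ 0 := algebraicIndependent_sx_sy.ne_zero 0

lemma sy_ne_zero : sy ≠ 0 := algebraicIndependent_sx_sy.ne_zero 1

/-- The span of the monomials in `x` and `y` of degree at least `m`, i.e. the ideal `⟨x, y⟩ ^ m`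
of `ℂ[x, y]`, as a subspace of `A`. -/
def monomialSpan (m : ℕ) : Submodule ℂ SL2R :=
  Submodule.span ℂ {a : SL2R | ∃ i j : ℕ, m ≤ i + j ∧ a = sx ^ i * sy ^ j}

lemma pow_mul_pow_mem_monomialSpan {m : ℕ} (i j : ℕ) (h : m ≤ i + j) :
    sx ^ i * sy ^ j ∈ monomialSpan m :=
  Submodule.subset_span ⟨i, j, h, rfl⟩

lemma sx_mem_monomialSpan : sx ∈ monomialSpan 1 := by
  simpa using pow_mul_pow_mem_monomialSpan 1 0 le_rfl

lemma sy_mem_monomialSpan : sy ∈ monomialSpan 1 := by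
  simpa using pow_mul_pow_mem_monomialSpan 0 1 le_rfl

instance : SetLike.GradedMonoid monomialSpan where
  one_mem := by simpa using pow_mul_pow_mem_monomialSpan 0 0 le_rfl
  mul_mem k l p q hp hq := by
    suffices monomialSpan k * monomialSpan l ≤ monomialSpan (k + l) from
      this (Submodule.mul_mem_mul hp hq)
    rw [monomialSpan, monomialSpan, Submodule.span_mul_span, Submodule.span_le]
    rintro _ ⟨_, ⟨i, j, h, rfl⟩, _, ⟨i', j', h', rfl⟩, rfl⟩
    convert! pow_mul_pow_mem_monomialSpan (m := k + l) (i + i') (j + j') (by lia) using 1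
    ring

lemma aeval_sx_sy_monomial (e : Fin 2 →₀ ℕ) (r : ℂ) :
    aeval ![sx, sy] (monomial e r) = r • (sx ^ e 0 * sy ^ e 1) := by
  rw [aeval_monomial, Finsupp.prod_fintype _ _ (by simp), Fin.prod_univ_two]
  exact (Algebra.smul_def _ _).symm

lemma aeval_mem_monomialSpan {m : ℕ} {P : MvPolynomial (Fin 2) ℂ}
    (hP : P ∈ idealOfVars (Fin 2) ℂ ^ m) : aeval ![sx, sy] P ∈ monomialSpan m := by
  rw [mem_pow_idealOfVars_iff] at hP
  rw [P.as_sum, map_sum]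
  refine Submodule.sum_mem _ fun e he => ?_
  rw [aeval_sx_sy_monomial]
  refine Submodule.smul_mem _ _ (pow_mul_pow_mem_monomialSpan _ _ ?_)
  simpa only [Finsupp.degree_eq_sum, Fin.sum_univ_two] using hP e he

lemma exists_aeval_eq_of_mem_monomialSpan {m : ℕ} {p : SL2R} (hp : p ∈ monomialSpan m) :
    ∃ P ∈ idealOfVars (Fin 2) ℂ ^ m, aeval ![sx, sy] P = p := by
  suffices monomialSpan m ≤ ((idealOfVars (Fin 2) ℂ ^ m).restrictScalars ℂ).map
      (aeval ![sx, sy] : MvPolynomial (Fin 2) ℂ →ₐ[ℂ] SL2R).toLinearMap from this hp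
  rw [monomialSpan, Submodule.span_le]
  rintro _ ⟨i, j, h, rfl⟩
  refine ⟨X 0 ^ i * X 1 ^ j, Ideal.pow_le_pow_right h ?_, by simp⟩
  rw [pow_add]
  exact Ideal.mul_mem_mul (Ideal.pow_mem_pow (Ideal.subset_span (Set.mem_range_self 0)) i)
    (Ideal.pow_mem_pow (Ideal.subset_span (Set.mem_range_self 1)) j)

lemma mem_monomialSpan_of_pow_mul_mem {m N M : ℕ} {f : SL2R}
    (hx : sx ^ N * f ∈ monomialSpan (m + N)) (hy : sy ^ M * f ∈ monomialSpan (m + M)) :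
    f ∈ monomialSpan m := by
  obtain ⟨P, hP, hPf⟩ := exists_aeval_eq_of_mem_monomialSpan hx
  obtain ⟨Q, -, hQf⟩ := exists_aeval_eq_of_mem_monomialSpan hy
  have hPQ : X 1 ^ M * P = X 0 ^ N * Q := by
    refine algebraicIndependent_sx_sy ?_
    simp only [map_mul, map_pow, aeval_X, Matrix.cons_val, hPf, hQf]
    ring
  obtain ⟨R, rfl⟩ : X 0 ^ N ∣ P := by
    refine X_prime.pow_dvd_of_dvd_mul_left N (fun h => ?_) (Dvd.intro Q hPQ.symm)
    simpa using X_dvd_X.1 (X_prime.dvd_of_dvd_pow h)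
  have hfR : f = aeval ![sx, sy] R :=
    mul_left_cancel₀ (pow_ne_zero N sx_ne_zero) (by simp [← hPf])
  rw [hfR]
  exact aeval_mem_monomialSpan (mem_pow_idealOfVars_of_X_pow_mul_mem hP)

/-! ### The kernel of the derivation -/

/-- The weight filtration of `A`: the span of the monomials of weight at least `m`, where `x` and
`y` have weight `1` and `u` and `v` have weight `-1`. Nonnegative weights suffice for `B_n`. -/
def weightFiltration (m : ℕ) : Submodule ℂ SL2R :=
  Submodule.span ℂ {w | ∃ a b c d : ℕ, m + c + d ≤ a + b ∧
    w = sx ^ a * sy ^ b * su ^ c * sv ^ d}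

lemma monomial_mem_weightFiltration {m : ℕ} (a b c d : ℕ) (h : m + c + d ≤ a + b) :
    sx ^ a * sy ^ b * su ^ c * sv ^ d ∈ weightFiltration m :=
  Submodule.subset_span ⟨a, b, c, d, h, rfl⟩

lemma weightFiltration_antitone : Antitone weightFiltration := by
  intro m m' h
  refine Submodule.span_mono ?_
  rintro w ⟨a, b, c, d, hw, rfl⟩
  exact ⟨a, b, c, d, by lia, rfl⟩

instance : SetLike.GradedMonoid weightFiltration where
  one_mem := by simpa using monomial_mem_weightFiltration 0 0 0 0 le_rfl
  mul_mem k l p q hp hq := by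
    suffices weightFiltration k * weightFiltration l ≤ weightFiltration (k + l) from
      this (Submodule.mul_mem_mul hp hq)
    rw [weightFiltration, weightFiltration, Submodule.span_mul_span, Submodule.span_le]
    rintro _ ⟨_, ⟨a, b, c, d, h, rfl⟩, _, ⟨a', b', c', d', h', rfl⟩, rfl⟩
    convert! monomial_mem_weightFiltration (m := k + l) (a + a') (b + b') (c + c') (d + d')
      (by lia) using 1
    ring

lemma exists_dvd_pow_mul_sub {m : ℕ} {s t : SL2R} (ht : t ∈ monomialSpan 1)
    (hmonomial : ∀ a b c d : ℕ, m + c + d ≤ a + b →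
      ∃ N, ∃ p ∈ monomialSpan (m + N), s ∣ t ^ N * (sx ^ a * sy ^ b * su ^ c * sv ^ d) - p)
    {f : SL2R} (hf : f ∈ weightFiltration m) :
    ∃ N, ∃ p ∈ monomialSpan (m + N), s ∣ t ^ N * f - p := by
  have hpow (N : ℕ) : t ^ N ∈ monomialSpan N := by simpa using SetLike.pow_mem_graded N ht
  induction hf using Submodule.span_induction with
  | mem w hw =>
    obtain ⟨a, b, c, d, h, rfl⟩ := hw
    exact hmonomial a b c d h
  | zero => exact ⟨0, 0, zero_mem _, by simp⟩
  | add f g _ _ hf hg =>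
    obtain ⟨N, p, hp, hfp⟩ := hf
    obtain ⟨M, q, hq, hgq⟩ := hg
    refine ⟨N + M, p * t ^ M + q * t ^ N, add_mem ?_ ?_, ?_⟩
    · rw [← add_assoc]
      exact SetLike.mul_mem_graded hp (hpow M)
    · rw [add_comm N, ← add_assoc]
      exact SetLike.mul_mem_graded hq (hpow N)
    · convert! (hfp.mul_right (t ^ M)).add (hgq.mul_right (t ^ N)) using 1
      ring
  | smul r f _ hf =>
    obtain ⟨N, p, hp, hfp⟩ := hf
    refine ⟨N, r • p, Submodule.smul_mem _ _ hp, ?_⟩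
    rw [mul_smul_comm, ← smul_sub]
    exact dvd_smul_of_dvd r hfp

lemma exists_su_dvd_sx_pow_mul_sub {m : ℕ} {f : SL2R} (hf : f ∈ weightFiltration m) :
    ∃ N, ∃ p ∈ monomialSpan (m + N), su ∣ sx ^ N * f - p := by
  refine exists_dvd_pow_mul_sub sx_mem_monomialSpan (fun a b c d h => ?_) hf
  rcases c with _ | c
  · refine ⟨d, sx ^ a * sy ^ b, pow_mul_pow_mem_monomialSpan _ _ (by lia), ?_⟩
    have hmod : su ∣ (sx * sv) ^ d - 1 ^ d :=
      (Dvd.intro_left sy (by linear_combination -sx_mul_sv)).trans (sub_dvd_pow_sub_pow _ _ d)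
    convert! hmod.mul_left (sx ^ a * sy ^ b) using 1
    ring
  · exact ⟨0, 0, zero_mem _, ⟨sx ^ a * sy ^ b * su ^ c * sv ^ d, by ring⟩⟩

lemma exists_sv_dvd_sy_pow_mul_sub {m : ℕ} {f : SL2R} (hf : f ∈ weightFiltration m) :
    ∃ N, ∃ p ∈ monomialSpan (m + N), sv ∣ sy ^ N * f - p := by
  refine exists_dvd_pow_mul_sub sy_mem_monomialSpan (fun a b c d h => ?_) hf
  rcases d with _ | d
  · refine ⟨c, (-1) ^ c * (sx ^ a * sy ^ b), ?_, ?_⟩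
    · have hmem : sx ^ a * sy ^ b ∈ monomialSpan (m + c) :=
        pow_mul_pow_mem_monomialSpan _ _ (by lia)
      rcases neg_one_pow_eq_or SL2R c with hc | hc <;> simpa [hc] using hmem
    have hmod : sv ∣ (sy * su) ^ c - (-1) ^ c :=
      (Dvd.intro_left sx (by linear_combination sx_mul_sv)).trans (sub_dvd_pow_sub_pow _ _ c)
    convert! hmod.mul_left (sx ^ a * sy ^ b) using 1
    ring
  · exact ⟨0, 0, zero_mem _, ⟨sx ^ a * sy ^ b * su ^ c * sv ^ d, by ring⟩⟩

/-- `D` is the derivation of `A` induced by the right `𝔾_a`-action on `SL₂`. -/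
structure IsGaDerivation (D : Derivation ℂ SL2R SL2R) : Prop where
  map_sx : D sx = 0
  map_sy : D sy = 0
  map_su : D su = sx
  map_sv : D sv = sy

namespace IsGaDerivation

variable {D : Derivation ℂ SL2R SL2R} (hD : IsGaDerivation D)
include hD

lemma nilSubalgebra_eq_top : nilSubalgebra D = ⊤ := by
  rw [eq_top_iff, ← adjoin_coordinates, Algebra.adjoin_le_iff]
  rintro _ (rfl | rfl | rfl | rfl)
  exacts [⟨1, hD.map_sx⟩, ⟨1, hD.map_sy⟩, ⟨2, by simp [hD.map_su, hD.map_sx]⟩,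
    ⟨2, by simp [hD.map_sv, hD.map_sy]⟩]

lemma map_eq_zero_of_mem_monomialSpan {m : ℕ} {p : SL2R} (hp : p ∈ monomialSpan m) : D p = 0 := by
  suffices monomialSpan m ≤ LinearMap.ker (D : SL2R →ₗ[ℂ] SL2R) from this hp
  rw [monomialSpan, Submodule.span_le]
  rintro _ ⟨i, j, -, rfl⟩
  simp [hD.map_sx, hD.map_sy]

lemma pow_mul_mem_monomialSpan_of_dvd_sub {s t p f : SL2R} {m N : ℕ} (hst : D s = t) (ht : t ≠ 0)
    (htD : D t = 0) (hp : p ∈ monomialSpan m) (hdvd : s ∣ t ^ N * f - p) (hf : D f = 0) :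
    t ^ N * f ∈ monomialSpan m := by
  have hker : D (t ^ N * f - p) = 0 := by
    simp [htD, hf, hD.map_eq_zero_of_mem_monomialSpan hp]
  have heq := eq_zero_of_dvd_of_map_eq_zero hD.nilSubalgebra_eq_top (hst ▸ ht) hdvd hker
  rwa [sub_eq_zero.1 heq]

lemma mem_monomialSpan_of_mem_weightFiltration {m : ℕ} {f : SL2R} (hf : f ∈ weightFiltration m)
    (hfD : D f = 0) : f ∈ monomialSpan m := by
  obtain ⟨N, p, hp, hpf⟩ := exists_su_dvd_sx_pow_mul_sub hf
  obtain ⟨M, q, hq, hqf⟩ := exists_sv_dvd_sy_pow_mul_sub hf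
  exact mem_monomialSpan_of_pow_mul_mem
    (hD.pow_mul_mem_monomialSpan_of_dvd_sub hD.map_su sx_ne_zero hD.map_sx hp hpf hfD)
    (hD.pow_mul_mem_monomialSpan_of_dvd_sub hD.map_sv sy_ne_zero hD.map_sy hq hqf hfD)

lemma map_monomial (a b c d : ℕ) :
    D (sx ^ a * sy ^ b * su ^ c * sv ^ d) =
      c • (sx ^ (a + 1) * sy ^ b * su ^ (c - 1) * sv ^ d) +
        d • (sx ^ a * sy ^ (b + 1) * su ^ c * sv ^ (d - 1)) := by
  simp only [Derivation.leibniz, Derivation.leibniz_pow, hD.map_sx, hD.map_sy, hD.map_su,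
    hD.map_sv, smul_eq_mul, nsmul_eq_mul]
  ring

lemma map_mem_weightFiltration {m : ℕ} {w : SL2R} (hw : w ∈ weightFiltration m) :
    D w ∈ weightFiltration (m + 2) := by
  suffices weightFiltration m ≤ (weightFiltration (m + 2)).comap (D : SL2R →ₗ[ℂ] SL2R) from this hw
  rw [weightFiltration, Submodule.span_le]
  rintro _ ⟨a, b, c, d, h, rfl⟩
  rw [SetLike.mem_coe, Submodule.mem_comap, Derivation.coeFn_coe, hD.map_monomial]
  refine add_mem ?_ ?_
  · rcases c with _ | c
    · simp
    · exact nsmul_mem (monomial_mem_weightFiltration _ _ _ _ (by lia)) _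
  · rcases d with _ | d
    · simp
    · exact nsmul_mem (monomial_mem_weightFiltration _ _ _ _ (by lia)) _

lemma iterate_mem_weightFiltration {m : ℕ} {w : SL2R} (hw : w ∈ weightFiltration m) (k : ℕ) :
    D^[k] w ∈ weightFiltration (m + 2 * k) := by
  induction k with
  | zero => exact hw
  | succ k ih =>
    rw [Function.iterate_succ_apply']
    exact hD.map_mem_weightFiltration ih

end IsGaDerivation

/-! ### The algebra `B_n` -/

lemma sx_mem_Bn (n : ℕ) : sx ∈ Bn n := Algebra.subset_adjoin (by simp)

lemma sy_mem_Bn (n : ℕ) : sy ∈ Bn n := Algebra.subset_adjoin (by simp)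

lemma monomialSpan_le_Bn (n m : ℕ) : monomialSpan m ≤ Subalgebra.toSubmodule (Bn n) := by
  rw [monomialSpan, Submodule.span_le]
  rintro _ ⟨i, j, -, rfl⟩
  exact (Bn n).mul_mem (pow_mem (sx_mem_Bn n) i) (pow_mem (sy_mem_Bn n) j)

lemma sx_pow_mul_su_mem_Bn (n : ℕ) : sx ^ (n + 1) * su ∈ Bn n :=
  Algebra.subset_adjoin (by simp)

lemma pow_mul_pow_mul_sv_mem_Bn {n i j : ℕ} (h : i + j = n + 1) : sx ^ i * sy ^ j * sv ∈ Bn n :=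
  Algebra.subset_adjoin (Or.inr ⟨i, by lia, by rw [← h, Nat.add_sub_cancel_left]⟩)

/-- The part of `A` of `D`-degree at most `k` and weight at least `n * k`: this is where the
products of generators of `B_n` with `k` factors other than `x` and `y` live. -/
def degreeWeightFiltration (D : Derivation ℂ SL2R SL2R) (n k : ℕ) : Submodule ℂ SL2R :=
  LinearMap.ker ((D : SL2R →ₗ[ℂ] SL2R) ^ (k + 1)) ⊓ weightFiltration (n * k)

lemma mem_degreeWeightFiltration {D : Derivation ℂ SL2R SL2R} {n k : ℕ} {a : SL2R} :
    a ∈ degreeWeightFiltration D n k ↔ D^[k + 1] a = 0 ∧ a ∈ weightFiltration (n * k) := by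
  simp [degreeWeightFiltration, Module.End.pow_apply]

instance (D : Derivation ℂ SL2R SL2R) (n : ℕ) :
    SetLike.GradedMonoid (degreeWeightFiltration D n) where
  one_mem := mem_degreeWeightFiltration.2 ⟨by simp, SetLike.one_mem_graded weightFiltration⟩
  mul_mem k l a b ha hb := by
    rw [mem_degreeWeightFiltration] at ha hb ⊢
    rw [mul_add]
    exact ⟨iterate_add_succ_mul_eq_zero ha.1 hb.1, SetLike.mul_mem_graded ha.2 hb.2⟩

namespace IsGaDerivation

variable {D : Derivation ℂ SL2R SL2R} (hD : IsGaDerivation D)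
include hD

lemma map_sx_pow_mul_su (i : ℕ) : D (sx ^ i * su) = sx ^ (i + 1) := by
  simp [hD.map_sx, hD.map_su, pow_succ]

lemma map_pow_mul_pow_mul_sv (i j : ℕ) : D (sx ^ i * sy ^ j * sv) = sx ^ i * sy ^ (j + 1) := by
  simp [hD.map_sx, hD.map_sy, hD.map_sv, pow_succ, mul_assoc]

lemma map_mem_Bn {n : ℕ} {b : SL2R} (hb : b ∈ Bn n) : D b ∈ Bn n := by
  induction hb using Algebra.adjoin_induction with
  | algebraMap r => simp
  | add p q _ _ hp hq =>
    rw [map_add]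
    exact add_mem hp hq
  | mul p q hp hq hDp hDq =>
    rw [Derivation.leibniz]
    exact add_mem (mul_mem hp hDq) (mul_mem hq hDp)
  | mem w hw =>
    rcases hw with (rfl | rfl | rfl) | ⟨i, -, rfl⟩
    · rw [hD.map_sx]
      exact zero_mem _
    · rw [hD.map_sy]
      exact zero_mem _
    · rw [hD.map_sx_pow_mul_su]
      exact pow_mem (sx_mem_Bn n) _
    · rw [hD.map_pow_mul_pow_mul_sv]
      exact mul_mem (pow_mem (sx_mem_Bn n) _) (pow_mem (sy_mem_Bn n) _)

lemma Bn_le_iSup_degreeWeightFiltration (n : ℕ) :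
    Subalgebra.toSubmodule (Bn n) ≤ ⨆ k, degreeWeightFiltration D n k := by
  refine adjoin_le_iSup_of_gradedMonoid (degreeWeightFiltration D n) ?_
  simp only [mem_degreeWeightFiltration]
  rintro _ ((rfl | rfl | rfl) | ⟨i, hi, rfl⟩)
  · exact ⟨0, hD.map_sx, by
      simpa using monomial_mem_weightFiltration (m := 0) 1 0 0 0⟩
  · exact ⟨0, hD.map_sy, by
      simpa using monomial_mem_weightFiltration (m := 0) 0 1 0 0⟩
  · refine ⟨1, ?_, ?_⟩
    · simp [hD.map_sx_pow_mul_su, hD.map_sx]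
    · simpa using monomial_mem_weightFiltration (m := n) (n + 1) 0 1 0
  · refine ⟨1, ?_, ?_⟩
    · simp [hD.map_pow_mul_pow_mul_sv, hD.map_sx, hD.map_sy]
    · simpa [hi] using monomial_mem_weightFiltration (m := n) i (n + 1 - i) 0 1

lemma iterate_mem_weightFiltration_of_mem_Bn {n : ℕ} (ν : ℕ) {c : SL2R} (hc : c ∈ Bn n) :
    D^[ν] c ∈ weightFiltration ((n + 2) * ν) := by
  suffices ⨆ k, degreeWeightFiltration D n k ≤
      (weightFiltration ((n + 2) * ν)).comap ((D : SL2R →ₗ[ℂ] SL2R) ^ ν) by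
    simpa [Module.End.pow_apply] using this (hD.Bn_le_iSup_degreeWeightFiltration n hc)
  refine iSup_le fun k a ha => ?_
  rw [mem_degreeWeightFiltration] at ha
  suffices D^[ν] a ∈ weightFiltration ((n + 2) * ν) by simpa [Module.End.pow_apply]
  rcases lt_or_ge k ν with hlt | hge
  · rw [iterate_map_eq_zero_of_le hlt ha.1]
    exact zero_mem _
  · exact weightFiltration_antitone (by nlinarith) (hD.iterate_mem_weightFiltration ha.2 ν)

lemma leadingSubmodule_Bn_le (n ν : ℕ) :
    leadingSubmodule D (Bn n) ν ≤ monomialSpan ((n + 2) * ν) := by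
  intro s hs
  obtain ⟨c, hc, -, rfl⟩ := mem_leadingSubmodule.1 hs
  exact hD.mem_monomialSpan_of_mem_weightFiltration
    (hD.iterate_mem_weightFiltration_of_mem_Bn ν hc) (map_eq_zero_of_mem_leadingSubmodule hs)

lemma pow_mul_pow_mem_leadingSubmodule_one {n i j : ℕ} (h : i + j = n + 2) :
    sx ^ i * sy ^ j ∈ leadingSubmodule D (Bn n) 1 := by
  rcases j with _ | j
  · obtain rfl : i = n + 2 := by lia
    rw [pow_zero, mul_one, ← hD.map_sx_pow_mul_su]
    exact map_mem_leadingSubmodule_one (sx_pow_mul_su_mem_Bn n)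
      (by simp [hD.map_sx_pow_mul_su, hD.map_sx])
  · rw [← hD.map_pow_mul_pow_mul_sv]
    exact map_mem_leadingSubmodule_one (pow_mul_pow_mul_sv_mem_Bn (by lia))
      (by simp [hD.map_pow_mul_pow_mul_sv, hD.map_sx, hD.map_sy])

lemma pow_mul_pow_mem_leadingSubmodule {n ν i j : ℕ} (h : (n + 2) * ν ≤ i + j) :
    sx ^ i * sy ^ j ∈ leadingSubmodule D (Bn n) ν := by
  induction ν generalizing i j with
  | zero =>
    have hmem : sx ^ i * sy ^ j ∈ monomialSpan 0 := pow_mul_pow_mem_monomialSpan i j (Nat.zero_le _)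
    exact mem_leadingSubmodule_zero.2
      ⟨monomialSpan_le_Bn n 0 hmem, hD.map_eq_zero_of_mem_monomialSpan hmem⟩
  | succ ν ih =>
    obtain ⟨i₁, j₁, i₂, j₂, rfl, rfl, h₁⟩ :
        ∃ i₁ j₁ i₂ j₂, i = i₁ + i₂ ∧ j = j₁ + j₂ ∧ i₂ + j₂ = n + 2 := by
      have : n + 2 ≤ i + j := (Nat.le_mul_of_pos_right _ ν.succ_pos).trans h
      exact ⟨i - min i (n + 2), j - (n + 2 - min i (n + 2)), min i (n + 2),
        n + 2 - min i (n + 2), by lia, by lia, by lia⟩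
    rw [pow_add, pow_add, mul_mul_mul_comm]
    exact mul_mem_leadingSubmodule (ih (by rw [mul_add] at h; lia))
      (hD.pow_mul_pow_mem_leadingSubmodule_one h₁)

theorem leadingSubmodule_Bn (n ν : ℕ) :
    leadingSubmodule D (Bn n) ν = monomialSpan ((n + 2) * ν) := by
  refine le_antisymm (hD.leadingSubmodule_Bn_le n ν) ?_
  rw [monomialSpan, Submodule.span_le]
  rintro _ ⟨i, j, h, rfl⟩
  exact hD.pow_mul_pow_mem_leadingSubmodule h

end IsGaDerivation

/-- For `n ≥ 1`, the subalgebra `B_n ⊆ A` is `D`-stable and for every `ν`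
the set `m_ν(B_n) = D^ν(B_n ∩ ker D^{ν+1})` equals the ℂ-linear span of the monomials
`x^i y^j` with `i + j ≥ (n+2)ν`, i.e. the ideal `⟨x,y⟩^{(n+2)ν}` of `ℂ[x,y] = ker D`. -/
theorem stmt10 (n : ℕ) (hn : 1 ≤ n) (D : Derivation ℂ SL2R SL2R)
    (hx : D sx = 0) (hy : D sy = 0) (hu : D su = sx) (hv : D sv = sy) (ν : ℕ) :
    (∀ b ∈ Bn n, D b ∈ Bn n) ∧
    {s : SL2R | ∃ c ∈ Bn n, (⇑D)^[ν + 1] c = 0 ∧ (⇑D)^[ν] c = s} =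
      ↑(Submodule.span ℂ {a : SL2R | ∃ i j : ℕ,
          (n + 2) * ν ≤ i + j ∧ a = sx ^ i * sy ^ j}) := by
  have hD : IsGaDerivation D := ⟨hx, hy, hu, hv⟩
  refine ⟨fun b => hD.map_mem_Bn, ?_⟩
  ext s
  exact mem_leadingSubmodule.symm.trans (SetLike.ext_iff.1 (hD.leadingSubmodule_Bn n ν) s)

end
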